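/- arXiv:1004.4980 — 2 statements merged into one kernel-verified Lean document; each statement's English description precedes it below -/
import Mathlib

section
/- Let G be a graph, k>0 a natural number, and α a basic k-cover of G. Set A_{k/2}={v∈V : α(v)≤k/2}. Then A_{k/2} is a point cover (dominating set) of G, and α is uniquely determined by its values on A_{k/2}: for every vertex w with α(w)>k/2 one has α(w)=max{k−α(v) : v∈A_{k/2} and {v,w}∈E}. -/
/-- A `k`-cover of a graph `G`. -/
def IsCover {n : ℕ} (G : SimpleGraph (Fin n)) (k : ℕ) (α : Fin n → ℕ) : Prop :=
  ∀ ⦃i j : Fin n⦄, G.Adj i j → k ≤ α i + α j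

/-- A basic `k`-cover. -/
def IsBasicCover {n : ℕ} (G : SimpleGraph (Fin n)) (k : ℕ) (α : Fin n → ℕ) : Prop :=
  IsCover G k α ∧ ∀ β : Fin n → ℕ, β ≤ α → IsCover G k β → β = α

/-- In a basic `k`-cover, every vertex with a positive value lies on an edge whose values sum
to exactly `k`. -/
lemma IsBasicCover.exists_adj_add_eq {n k : ℕ} {G : SimpleGraph (Fin n)} {α : Fin n → ℕ}
    (hα : IsBasicCover G k α) {w : Fin n} (hw : 0 < α w) :
    ∃ v, G.Adj v w ∧ α v + α w = k := by
  by_contra! h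
  have hlt : ∀ v, G.Adj v w → k < α v + α w := fun v hv =>
    lt_of_le_of_ne (hα.1 hv) (h v hv).symm
  have heq : Function.update α w (α w - 1) = α := by
    refine hα.2 _ (update_le_self_iff.2 (Nat.sub_le _ _)) fun i j hij => ?_
    by_cases hi : i = w
    · subst hi
      have := hlt j hij.symm
      rw [Function.update_self, Function.update_of_ne hij.ne']
      omega
    · by_cases hj : j = w
      · subst hj
        have := hlt i hij
        rw [Function.update_self, Function.update_of_ne hi]
        omega
      · rw [Function.update_of_ne hi, Function.update_of_ne hj]
        exact hα.1 hij
  have := congrFun heq w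
  rw [Function.update_self] at this
  omega

/-- Let `α` be a basic `k`-cover (`k > 0`) of a graph `G` and
`A_{k/2} = {v : α v ≤ k/2}`.  Then `A_{k/2}` is a point cover (dominating set) of `G`:
every vertex `w` with `α w > k/2` has a neighbour in `A_{k/2}`; moreover `α` is determined
by its values on `A_{k/2}`: for every `w` with `α w > k/2` one has
`α w = max {k - α v : v ∈ A_{k/2}, {v,w} ∈ E}`. -/
theorem basicCover_determined_by_small_values {n k : ℕ} (G : SimpleGraph (Fin n))
    (hiso : ∀ v : Fin n, ∃ w, G.Adj v w)
    (hk : 0 < k) (α : Fin n → ℕ) (hα : IsBasicCover G k α) :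
    (∀ w : Fin n, k < 2 * α w → ∃ v : Fin n, G.Adj v w ∧ 2 * α v ≤ k) ∧
    (∀ w : Fin n, k < 2 * α w →
      α w = sSup {m : ℕ | ∃ v : Fin n, G.Adj v w ∧ 2 * α v ≤ k ∧ m = k - α v}) := by
  have key : ∀ w, k < 2 * α w → ∃ v, G.Adj v w ∧ α v + α w = k := fun w hw =>
    hα.exists_adj_add_eq (by omega)
  refine ⟨fun w hw => ?_, fun w hw => ?_⟩
  · obtain ⟨v, hv, h⟩ := key w hw
    exact ⟨v, hv, by omega⟩
  · obtain ⟨v, hv, h⟩ := key w hw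
    symm
    refine IsGreatest.csSup_eq ⟨⟨v, hv, by omega, by omega⟩, ?_⟩
    rintro m ⟨u, hu, -, rfl⟩
    have := hα.1 hu
    omega
end

section
/- If G is a tree, then gdim(G) = ν(G) + 1, where ν(G) is the matching number of G; consequently the Krull dimension of the symbolic fiber cone satisfies dim Ā(G) = ν(G) + 1. -/
open MvPolynomial

/-- The polynomial ring `S[t] = K[x_1,…,x_n][t]`, realised as a polynomial ring in the
variables `some i ↦ x_i` and `none ↦ t`. -/
abbrev St (K : Type*) [Field K] (n : ℕ) := MvPolynomial (Option (Fin n)) K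

/-- The element `x₁^{α 1} ⋯ x_n^{α n} · t^k` of `S[t]`. -/
noncomputable def coverMonomial (K : Type*) [Field K] {n : ℕ} (α : Fin n → ℕ) (k : ℕ) :
    St K n :=
  MvPolynomial.monomial (Finsupp.equivFunOnFinite.symm (fun o => o.elim k α)) 1

/-- The symbolic Rees algebra `A(G) = ⊕_k J(G)^{(k)} t^k = K[x^α t^k : α a k-cover]` of the
cover ideal of `G`, as a subalgebra of `S[t]`. -/
noncomputable def symbolicRees (K : Type*) [Field K] {n : ℕ} (G : SimpleGraph (Fin n)) :
    Subalgebra K (St K n) :=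
  Algebra.adjoin K {p | ∃ k : ℕ, ∃ α : Fin n → ℕ, IsCover G k α ∧ p = coverMonomial K α k}

/-- The ideal `m·A(G)` of `A(G)`, generated by the variables `x_i = x_i t^0`. -/
noncomputable def irrelevantIdeal (K : Type*) [Field K] {n : ℕ} (G : SimpleGraph (Fin n)) :
    Ideal (symbolicRees K G) :=
  Ideal.span {a : symbolicRees K G | ∃ i : Fin n, (a : St K n) = MvPolynomial.X (some i)}

/-- The symbolic fiber cone `Ā(G) = A(G)/mA(G)` of the cover ideal of `G`. -/
noncomputable def symbolicFiberCone (K : Type*) [Field K] {n : ℕ}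
    (G : SimpleGraph (Fin n)) : Type _ :=
  symbolicRees K G ⧸ irrelevantIdeal K G

noncomputable instance (K : Type*) [Field K] {n : ℕ} (G : SimpleGraph (Fin n)) :
    CommRing (symbolicFiberCone K G) :=
  Ideal.Quotient.commRing (irrelevantIdeal K G)

/-- A free parameter pair. -/
def IsFreeParameterPair {n r : ℕ} (G : SimpleGraph (Fin n)) (a b : Fin r → Fin n) : Prop :=
  Function.Injective a ∧ Function.Injective b ∧
  (∀ i j : Fin r, ¬ G.Adj (a i) (a j)) ∧
  (∀ i j : Fin r, a i ≠ b j) ∧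
  (∀ i : Fin r, G.Adj (a i) (b i)) ∧
  (∀ i j : Fin r, G.Adj (a i) (b j) → i ≤ j)

/-- `G` has a free parameter set of cardinality `r`. -/
def HasFreeParameterSet {n : ℕ} (G : SimpleGraph (Fin n)) (r : ℕ) : Prop :=
  ∃ a b : Fin r → Fin n, IsFreeParameterPair G a b

/-- The graphical dimension. -/
noncomputable def gdim {n : ℕ} (G : SimpleGraph (Fin n)) : ℕ :=
  sSup {r : ℕ | HasFreeParameterSet G r} + 1

/-- `G` has a matching of `r` pairwise disjoint edges. -/
def HasMatchingOfSize {n : ℕ} (G : SimpleGraph (Fin n)) (r : ℕ) : Prop :=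
  ∃ e : Fin r → Fin n × Fin n, (∀ i, G.Adj (e i).1 (e i).2) ∧
    ∀ i j : Fin r, i ≠ j →
      (e i).1 ≠ (e j).1 ∧ (e i).1 ≠ (e j).2 ∧ (e i).2 ≠ (e j).1 ∧ (e i).2 ≠ (e j).2

/-- The matching number `ν(G)`. -/
noncomputable def matchingNumber {n : ℕ} (G : SimpleGraph (Fin n)) : ℕ :=
  sSup {r : ℕ | HasMatchingOfSize G r}

section Matching

theorem exists_equiv_fin_monotone {ι : Type*} [Fintype ι] (key : ι → ℕ) {r : ℕ}
    (hr : Fintype.card ι = r) : ∃ e : Fin r ≃ ι, Monotone (key ∘ e) := by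
  have e := Fintype.equivFinOfCardEq hr
  exact ⟨(Tuple.sort (key ∘ e.symm)).trans e.symm, Tuple.monotone_sort (key ∘ e.symm)⟩

theorem HasFreeParameterSet.hasMatchingOfSize {n r : ℕ} {G : SimpleGraph (Fin n)}
    (h : HasFreeParameterSet G r) : HasMatchingOfSize G r := by
  obtain ⟨a, b, ha, hb, -, hab, hadj, -⟩ := h
  exact ⟨fun i => (a i, b i), hadj, fun i j hij =>
    ⟨ha.ne hij, hab i j, (hab j i).symm, hb.ne hij⟩⟩

theorem HasMatchingOfSize.le_card_of_cover {n r : ℕ} {G : SimpleGraph (Fin n)}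
    (h : HasMatchingOfSize G r) {C : Finset (Fin n)}
    (hC : ∀ u v, G.Adj u v → u ∈ C ∨ v ∈ C) : r ≤ C.card := by
  obtain ⟨e, hadj, hdisj⟩ := h
  have hmem : ∀ i, ∃ v ∈ C, v = (e i).1 ∨ v = (e i).2 := fun i => by
    rcases hC _ _ (hadj i) with h | h
    exacts [⟨_, h, Or.inl rfl⟩, ⟨_, h, Or.inr rfl⟩]
  choose f hf hfe using hmem
  have hinj : Function.Injective f := fun i j hij => by
    by_contra hne
    grind
  simpa using Finset.card_le_card_of_injOn f (s := Finset.univ) (t := C)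
    (fun i _ => hf i) hinj.injOn

end Matching

section RootedTree

/-- A rooting of a graph: a root, a depth function and a parent function such that the edges
are exactly the pairs formed by a non-root vertex and its parent. -/
structure TreeRooting {V : Type*} (G : SimpleGraph V) where
  root : V
  depth : V → ℕ
  parent : V → V
  depth_root : depth root = 0
  adj_parent : ∀ v, v ≠ root → G.Adj v (parent v)
  depth_eq : ∀ v, v ≠ root → depth v = depth (parent v) + 1
  eq_parent_of_adj : ∀ u v, G.Adj u v →
    (u ≠ root ∧ parent u = v) ∨ (v ≠ root ∧ parent v = u)

theorem SimpleGraph.IsTree.eq_of_dist_eq_dist_add_one {V : Type*} {G : SimpleGraph V}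
    (hG : G.IsTree) {ρ v p q : V} (hp : G.Adj p v) (hq : G.Adj q v)
    (hdp : G.dist ρ v = G.dist ρ p + 1) (hdq : G.dist ρ v = G.dist ρ q + 1) : p = q := by
  obtain ⟨P, hP⟩ := hG.connected.exists_walk_length_eq_dist ρ p
  obtain ⟨Q, hQ⟩ := hG.connected.exists_walk_length_eq_dist ρ q
  have hP' : (P.concat hp).IsPath := SimpleGraph.Walk.isPath_of_length_eq_dist _ (by simp; omega)
  have hQ' : (Q.concat hq).IsPath := SimpleGraph.Walk.isPath_of_length_eq_dist _ (by simp; omega)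
  have h := (hG.existsUnique_path ρ v).unique hP' hQ'
  simpa using congrArg SimpleGraph.Walk.penultimate h

theorem SimpleGraph.IsTree.exists_treeRooting {V : Type*} {G : SimpleGraph V} (hG : G.IsTree)
    (ρ : V) : ∃ T : TreeRooting G, T.root = ρ := by
  have hpar : ∀ v, ∃ p, v ≠ ρ → G.Adj v p ∧ G.dist ρ v = G.dist ρ p + 1 := fun v => by
    by_cases hv : v = ρ
    · exact ⟨v, fun h => absurd hv h⟩
    obtain ⟨P, hP⟩ := hG.connected.exists_walk_length_eq_dist ρ v
    have hnil : ¬ P.Nil := fun h => hv h.eq.symm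
    have hadj := P.adj_penultimate hnil
    refine ⟨P.penultimate, fun _ => ⟨hadj.symm, ?_⟩⟩
    have h1 : G.dist ρ P.penultimate ≤ P.dropLast.length := SimpleGraph.dist_le _
    have h2 : P.dropLast.length + 1 = P.length := by
      have := SimpleGraph.Walk.not_nil_iff_lt_length.1 hnil
      simp
      omega
    rcases hG.dist_eq_dist_add_one_of_adj ρ hadj with h | h <;> omega
  choose parent hparent using hpar
  refine ⟨⟨ρ, G.dist ρ, parent, by simp, fun v hv => (hparent v hv).1,
    fun v hv => (hparent v hv).2, fun u v huv => ?_⟩, rfl⟩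
  have key : ∀ u v, G.Adj u v → G.dist ρ u = G.dist ρ v + 1 → u ≠ ρ ∧ parent u = v := by
    intro u v huv h
    have hu : u ≠ ρ := by rintro rfl; simp at h
    exact ⟨hu, hG.eq_of_dist_eq_dist_add_one (hparent u hu).1.symm huv.symm (hparent u hu).2 h⟩
  rcases hG.dist_eq_dist_add_one_of_adj ρ huv with h | h
  exacts [Or.inl (key u v huv h), Or.inr (key v u huv.symm h)]

/-- A nontrivial finite tree can be rooted at the neighbour of a leaf. -/
theorem SimpleGraph.IsTree.exists_treeRooting_leaf {V : Type*} [Finite V] [Nontrivial V]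
    {G : SimpleGraph V} (hG : G.IsTree) :
    ∃ (T : TreeRooting G) (l : V), l ≠ T.root ∧ T.parent l = T.root ∧
      ∀ w, w ≠ T.root → T.parent w ≠ l := by
  classical
  have := Fintype.ofFinite V
  obtain ⟨l, hl⟩ := hG.exists_vert_degree_one_of_nontrivial
  obtain ⟨ρ, hρ, huniq⟩ := SimpleGraph.degree_eq_one_iff_existsUnique_adj.1 hl
  obtain ⟨T, rfl⟩ := hG.exists_treeRooting ρ
  have hl : l ≠ T.root := hρ.ne
  exact ⟨T, l, hl, huniq _ (T.adj_parent l hl), fun w hw h =>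
    hw (huniq w (h ▸ (T.adj_parent w hw).symm))⟩

namespace TreeRooting

variable {V : Type*} {G : SimpleGraph V} (T : TreeRooting G)

/-- Functions on a rooted tree may be defined by recursion from the root. -/
theorem exists_rec (a : ℕ) (g : V → ℕ → ℕ) :
    ∃ f : V → ℕ, f T.root = a ∧ ∀ v, v ≠ T.root → f v = g v (f (T.parent v)) := by
  classical
  have hwf : WellFounded fun u v : V => T.depth u < T.depth v := (measure T.depth).wf
  let F : ∀ v, (∀ u, T.depth u < T.depth v → ℕ) → ℕ := fun v ih =>
    if hv : v = T.root then a else g v (ih (T.parent v) (by have := T.depth_eq v hv; omega))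
  refine ⟨hwf.fix F, ?_, fun v hv => ?_⟩
  · rw [hwf.fix_eq]; simp [F]
  · rw [hwf.fix_eq]; simp [F, hv]

/-- The greedy vertex cover: a vertex is chosen when one of its children is not. -/
theorem exists_greedyCover [Finite V] :
    ∃ C : V → Prop, ∀ v, C v ↔ ∃ w, w ≠ T.root ∧ T.parent w = v ∧ ¬ C w := by
  have hwf : WellFounded fun w v : V => T.depth v < T.depth w := by
    have : IsTrans V fun w v : V => T.depth v < T.depth w := ⟨fun _ _ _ h h' => h'.trans h⟩
    have : Std.Irrefl fun w v : V => T.depth v < T.depth w := ⟨fun _ => lt_irrefl _⟩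
    exact Finite.wellFounded_of_trans_of_irrefl _
  let F : ∀ v, (∀ w, T.depth v < T.depth w → Prop) → Prop := fun v ih =>
    ∃ (w : V) (hw : w ≠ T.root) (hp : T.parent w = v),
      ¬ ih w (by have := T.depth_eq w hw; subst hp; omega)
  refine ⟨hwf.fix F, fun v => ?_⟩
  rw [hwf.fix_eq]
  exact ⟨fun ⟨w, h, h', h''⟩ => ⟨w, h, h', h''⟩, fun ⟨w, h, h', h''⟩ => ⟨w, h, h', h''⟩⟩

end TreeRooting

/-- A rooted tree together with a vertex cover containing the root and a matching which joins
each vertex of the cover to one of its children outside the cover. -/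
structure CoveredTree {V : Type*} (G : SimpleGraph V) extends TreeRooting G where
  cover : Finset V
  child : V → V
  root_mem : root ∈ cover
  mem_or_mem : ∀ u v, G.Adj u v → u ∈ cover ∨ v ∈ cover
  child_ne_root : ∀ v ∈ cover, child v ≠ root
  parent_child : ∀ v ∈ cover, parent (child v) = v
  child_notMem : ∀ v ∈ cover, child v ∉ cover

theorem SimpleGraph.IsTree.nonempty_coveredTree {V : Type*} [Finite V] [Nontrivial V]
    {G : SimpleGraph V} (hG : G.IsTree) : Nonempty (CoveredTree G) := by
  classical
  have := Fintype.ofFinite V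
  obtain ⟨T, l, hl, hlp, hleaf⟩ := hG.exists_treeRooting_leaf
  obtain ⟨C, hC⟩ := T.exists_greedyCover
  have hchild : ∀ v, ∃ w, C v → w ≠ T.root ∧ T.parent w = v ∧ ¬ C w := fun v => by
    by_cases hv : C v
    · obtain ⟨w, hw⟩ := (hC v).1 hv
      exact ⟨w, fun _ => hw⟩
    · exact ⟨v, fun h => absurd h hv⟩
  choose c hc using hchild
  have hlC : ¬ C l := fun h => by
    obtain ⟨w, hw, hwl, -⟩ := (hC l).1 h
    exact hleaf w hw hwl
  refine ⟨⟨T, Finset.univ.filter C, c, ?_, fun u v huv => ?_, ?_, ?_, ?_⟩⟩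
  · simpa using (hC _).2 ⟨l, hl, hlp, hlC⟩
  · simp only [Finset.mem_filter, Finset.mem_univ, true_and]
    rcases T.eq_parent_of_adj u v huv with ⟨h, h'⟩ | ⟨h, h'⟩
    · by_cases hu : C u
      exacts [Or.inl hu, Or.inr ((hC v).2 ⟨u, h, h', hu⟩)]
    · by_cases hv : C v
      exacts [Or.inr hv, Or.inl ((hC u).2 ⟨v, h, h', hv⟩)]
  · intro v hv
    exact (hc v (by simpa using hv)).1
  · intro v hv
    exact (hc v (by simpa using hv)).2.1
  · intro v hv
    simpa using (hc v (by simpa using hv)).2.2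

namespace CoveredTree

theorem hasFreeParameterSet {n : ℕ} {G : SimpleGraph (Fin n)} (T : CoveredTree G) :
    HasFreeParameterSet G T.cover.card := by
  obtain ⟨e, he⟩ := exists_equiv_fin_monotone (fun v : T.cover => T.depth v)
    (Fintype.card_coe T.cover)
  refine ⟨fun i => T.child (e i), fun i => e i, fun i j h => ?_, fun i j h => ?_,
    fun i j h => ?_, fun i j h => ?_, fun i => ?_, fun i j h => ?_⟩
  · have h' := congrArg T.parent h
    simp only [T.parent_child _ (e _).2] at h'
    exact e.injective (Subtype.ext h')
  · exact e.injective (Subtype.ext h)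
  · rcases T.mem_or_mem _ _ h with h | h
    exacts [T.child_notMem _ (e i).2 h, T.child_notMem _ (e j).2 h]
  · have h' := T.child_notMem _ (e i).2
    dsimp only at h
    rw [h] at h'
    exact h' (e j).2
  · have h := T.adj_parent _ (T.child_ne_root _ (e i).2)
    rwa [T.parent_child _ (e i).2] at h
  · rcases T.eq_parent_of_adj _ _ h with ⟨-, h'⟩ | ⟨h1, h'⟩
    · rw [T.parent_child _ (e i).2] at h'
      exact (e.injective (Subtype.ext h')).le
    · by_contra hlt
      have hmono : T.depth (e j) ≤ T.depth (e i) := he (not_le.1 hlt).le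
      have hj := T.depth_eq _ h1
      have hi := T.depth_eq _ (T.child_ne_root _ (e i).2)
      rw [T.parent_child _ (e i).2] at hi
      rw [h'] at hj
      dsimp only at hj
      omega

theorem matchingNumber_eq {n : ℕ} {G : SimpleGraph (Fin n)} (T : CoveredTree G) :
    matchingNumber G = T.cover.card :=
  IsGreatest.csSup_eq ⟨T.hasFreeParameterSet.hasMatchingOfSize,
    fun _ h => HasMatchingOfSize.le_card_of_cover h T.mem_or_mem⟩

theorem gdim_eq {n : ℕ} {G : SimpleGraph (Fin n)} (T : CoveredTree G) :
    gdim G = T.cover.card + 1 :=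
  congrArg (· + 1) (IsGreatest.csSup_eq ⟨T.hasFreeParameterSet,
    fun _ h => HasMatchingOfSize.le_card_of_cover
      (HasFreeParameterSet.hasMatchingOfSize h) T.mem_or_mem⟩)

end CoveredTree

end RootedTree

section PrimeChains

/-- Elements `x i ∈ P (i + 1) \ P i` picked along a chain of primes `P 0 ≤ P 1 ≤ ⋯ ≤ P m` of a
`K`-algebra are algebraically independent over `K` modulo `P 0`. -/
theorem MvPolynomial.eq_zero_of_aeval_mem_of_prime_chain {K R : Type*} [Field K] [CommRing R]
    [Algebra K R] {m : ℕ} (P : Fin (m + 1) → Ideal R) (hP : ∀ i, (P i).IsPrime)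
    (hle : ∀ i : Fin m, P i.castSucc ≤ P i.succ) (x : Fin m → R)
    (hmem : ∀ i, x i ∈ P i.succ) (hnot : ∀ i : Fin m, x i ∉ P i.castSucc)
    (p : MvPolynomial (Fin m) K) (hp : aeval x p ∈ P 0) : p = 0 := by
  induction m with
  | zero =>
    rw [eq_C_of_isEmpty p] at hp ⊢
    by_contra hne
    have hc : coeff 0 p ≠ 0 := fun h => hne (by rw [h, C_0])
    rw [aeval_C] at hp
    exact (hP 0).ne_top (Ideal.eq_top_of_isUnit_mem _ hp ((Ne.isUnit hc).map _))
  | succ m ih =>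
    let φ : MvPolynomial (Fin m) K →+* R := (aeval fun i : Fin m => x i.succ : _ →ₐ[K] R)
    have hφ : aeval x p = Polynomial.eval₂ φ (x 0) (finSuccEquiv K m p) := by
      have : ((aeval x : _ →ₐ[K] R) : MvPolynomial (Fin (m + 1)) K →+* R) =
          (Polynomial.eval₂RingHom φ (x 0)).comp (finSuccEquiv K m : _ →+* _) := by
        refine ringHom_ext (fun c => ?_) fun i => ?_
        · simp [finSuccEquiv_apply, φ]
        · refine Fin.cases ?_ (fun j => ?_) i <;> simp [finSuccEquiv_apply, φ]
      exact congrArg (fun f : _ →+* R => f p) this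
    have hzero : ∀ q : Polynomial (MvPolynomial (Fin m) K), Polynomial.eval₂ φ (x 0) q ∈ P 0 →
        q.coeff 0 = 0 ∧ Polynomial.eval₂ φ (x 0) q.divX ∈ P 0 := fun q hq => by
      have hdec : Polynomial.eval₂ φ (x 0) q =
          Polynomial.eval₂ φ (x 0) q.divX * x 0 + φ (q.coeff 0) := by
        conv_lhs => rw [← q.divX_mul_X_add]
        simp
      have h0 : q.coeff 0 = 0 := by
        refine ih (fun i => P i.succ) (fun i => hP _) (fun i => hle i.succ) (fun i => x i.succ)
          (fun i => hmem _) (fun i => hnot i.succ) _ ?_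
        have h1 : Polynomial.eval₂ φ (x 0) q.divX * x 0 + φ (q.coeff 0) ∈ P (Fin.succ 0) :=
          hdec ▸ hle 0 hq
        exact (Ideal.add_mem_iff_right _ (Ideal.mul_mem_left _ _ (hmem 0))).1 h1
      refine ⟨h0, ?_⟩
      rw [hdec, h0, map_zero, add_zero] at hq
      exact ((hP 0).mem_or_mem hq).resolve_right (hnot 0)
    have hcoeff : ∀ k (q : Polynomial (MvPolynomial (Fin m) K)),
        Polynomial.eval₂ φ (x 0) q ∈ P 0 → q.coeff k = 0 := by
      intro k
      induction k with
      | zero => exact fun q hq => (hzero q hq).1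
      | succ k ihk => exact fun q hq => by simpa using ihk _ (hzero q hq).2
    rw [hφ] at hp
    exact (finSuccEquiv K m).injective
      ((Polynomial.ext fun k => by simpa using hcoeff k _ hp).trans (map_zero _).symm)

end PrimeChains

section Covers

variable {n : ℕ} {G : SimpleGraph (Fin n)}

theorem IsBasicCover.eq_of_eqOn_cover {k : ℕ} {α β : Fin n → ℕ} (hα : IsBasicCover G k α)
    (hβ : IsBasicCover G k β) {C : Finset (Fin n)} (hC : ∀ u v, G.Adj u v → u ∈ C ∨ v ∈ C)
    (h : ∀ v ∈ C, α v = β v) : α = β := by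
  have hcov : IsCover G k (α ⊓ β) := fun i j hij => by
    have h1 := hα.1 hij
    have h2 := hβ.1 hij
    simp only [Pi.inf_apply]
    rcases hC i j hij with hi | hi <;> have := h _ hi <;> omega
  exact (hα.2 _ inf_le_left hcov).symm.trans (hβ.2 _ inf_le_right hcov)

theorem IsBasicCover.le {k : ℕ} {α : Fin n → ℕ} (hα : IsBasicCover G k α) (v : Fin n) :
    α v ≤ k := by
  have hcov : IsCover G k (α ⊓ fun _ => k) := fun i j hij => by
    have h1 := hα.1 hij
    simp only [Pi.inf_apply]
    omega
  have := congrFun (hα.2 _ inf_le_left hcov) v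
  simp only [Pi.inf_apply] at this
  omega

theorem IsCover.exists_sub_single {k : ℕ} {α : Fin n → ℕ} (hα : IsCover G k α)
    (hnb : ¬ IsBasicCover G k α) :
    ∃ i, 0 < α i ∧ IsCover G k (α - Pi.single i 1) := by
  simp only [IsBasicCover, hα, true_and, not_forall] at hnb
  obtain ⟨β, hle, hβ, hne⟩ := hnb
  obtain ⟨i, hi⟩ := Function.ne_iff.1 hne
  have hlt : β i < α i := lt_of_le_of_ne (hle i) hi
  refine ⟨i, by omega, fun u v huv => ?_⟩
  have h0 := hβ huv
  have hb : ∀ w, β w ≤ (α - Pi.single i 1 : Fin n → ℕ) w := fun w => by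
    by_cases hw : w = i
    · subst hw
      simp only [Pi.sub_apply, Pi.single_eq_same]
      omega
    · simpa [Pi.single_eq_of_ne hw] using hle w
  have := hb u
  have := hb v
  omega

/-- An exponent vector `(k, α)` of `S[t]` for which `α` is a `k`-cover. -/
def IsCoverExponent (G : SimpleGraph (Fin n)) (s : Option (Fin n) →₀ ℕ) : Prop :=
  IsCover G (s none) fun i => s (some i)

theorem IsCoverExponent.add {s t : Option (Fin n) →₀ ℕ} (hs : IsCoverExponent G s)
    (ht : IsCoverExponent G t) : IsCoverExponent G (s + t) := fun i j hij => by
  have h1 := hs hij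
  have h2 := ht hij
  simp only [Finsupp.add_apply] at h1 h2 ⊢
  omega

theorem isCoverExponent_zero : IsCoverExponent G 0 := fun _ _ _ => by simp

/-- The exponents of basic covers of degree at most `k`. -/
abbrev BasicExponent (G : SimpleGraph (Fin n)) (k : ℕ) : Type :=
  {s : Option (Fin n) →₀ ℕ // s none ≤ k ∧ IsBasicCover G (s none) fun i => s (some i)}

theorem finite_basicExponent_and_card_le {C : Finset (Fin n)}
    (hC : ∀ u v, G.Adj u v → u ∈ C ∨ v ∈ C) (k : ℕ) :
    Finite (BasicExponent G k) ∧ Nat.card (BasicExponent G k) ≤ (k + 1) ^ (C.card + 1) := by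
  let f : BasicExponent G k → Fin (k + 1) × (C → Fin (k + 1)) := fun s =>
    (⟨s.1 none, Nat.lt_succ_of_le s.2.1⟩,
      fun v => ⟨s.1 (some v), Nat.lt_succ_of_le ((s.2.2.le v).trans s.2.1)⟩)
  have hf : Function.Injective f := fun s t hst => by
    simp only [f, Prod.mk.injEq, Fin.mk.injEq, funext_iff] at hst
    obtain ⟨h0, h1⟩ := hst
    have hs := s.2.2
    rw [h0] at hs
    have h := hs.eq_of_eqOn_cover t.2.2 hC fun v hv => h1 ⟨v, hv⟩
    refine Subtype.ext (Finsupp.ext fun o => ?_)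
    cases o with
    | none => exact h0
    | some v => exact congrFun h v
  refine ⟨Finite.of_injective f hf, (Nat.card_le_card_of_injective f hf).trans ?_⟩
  simp [pow_succ, mul_comm]

end Covers

section SymbolicRees

variable {K : Type*} [Field K] {n : ℕ} {G : SimpleGraph (Fin n)}

theorem coverMonomial_eq_monomial (s : Option (Fin n) →₀ ℕ) :
    coverMonomial K (fun i => s (some i)) (s none) = monomial s 1 := by
  unfold coverMonomial
  congr 2
  ext o
  cases o <;> rfl

theorem monomial_mem_symbolicRees {s : Option (Fin n) →₀ ℕ} (hs : IsCoverExponent G s) :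
    (monomial s 1 : St K n) ∈ symbolicRees K G :=
  Algebra.subset_adjoin ⟨_, _, hs, (coverMonomial_eq_monomial s).symm⟩

theorem isCoverExponent_of_mem_support {f : St K n} (hf : f ∈ symbolicRees K G)
    {s : Option (Fin n) →₀ ℕ} (hs : s ∈ f.support) : IsCoverExponent G s := by
  classical
  induction hf using Algebra.adjoin_induction generalizing s with
  | mem x hx =>
    obtain ⟨k, α, hα, rfl⟩ := hx
    have := Finset.mem_singleton.1 (support_monomial_subset hs)
    subst this
    exact hα
  | algebraMap r =>
    rw [algebraMap_eq, C_apply] at hs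
    have := Finset.mem_singleton.1 (support_monomial_subset hs)
    subst this
    exact isCoverExponent_zero
  | add x y _ _ hx hy =>
    rcases Finset.mem_union.1 (support_add hs) with h | h
    exacts [hx h, hy h]
  | mul x y _ _ hx hy =>
    obtain ⟨a, ha, b, hb, rfl⟩ := Finset.mem_add.1 (support_mul x y hs)
    exact (hx ha).add (hy hb)

variable (K) in
/-- The monomial of a cover, as an element of the symbolic Rees algebra. -/
noncomputable def reesMonomial (s : Option (Fin n) →₀ ℕ) (hs : IsCoverExponent G s) :
    symbolicRees K G :=
  ⟨monomial s 1, monomial_mem_symbolicRees hs⟩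

theorem eq_sum_reesMonomial (f : symbolicRees K G) :
    f = ∑ s ∈ (f : St K n).support.attach, coeff s.1 (f : St K n) •
      reesMonomial K s.1 (isCoverExponent_of_mem_support f.2 s.2) := by
  apply Subtype.ext
  rw [AddSubmonoidClass.coe_finsetSum]
  conv_lhs => rw [(f : St K n).as_sum, ← Finset.sum_attach]
  refine Finset.sum_congr rfl fun s _ => ?_
  simp [reesMonomial, smul_monomial]

theorem reesMonomial_mem_irrelevantIdeal {s : Option (Fin n) →₀ ℕ} (hs : IsCoverExponent G s)
    (hnb : ¬ IsBasicCover G (s none) fun i => s (some i)) :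
    reesMonomial K s hs ∈ irrelevantIdeal K G := by
  classical
  obtain ⟨i, hi, hcov⟩ := IsCover.exists_sub_single hs hnb
  have hle : Finsupp.single (some i) 1 ≤ s := by simpa [Nat.one_le_iff_ne_zero] using hi.ne'
  have ht : IsCoverExponent G (s - Finsupp.single (some i) 1) := by
    intro u v huv
    have := hcov huv
    simpa [Finsupp.single_apply, Pi.single_apply, eq_comm] using this
  have hx : IsCoverExponent G (Finsupp.single (some i) 1) := fun u v _ => by simp
  have hmul : reesMonomial K s hs = reesMonomial K _ ht * reesMonomial K _ hx := by
    apply Subtype.ext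
    simp [reesMonomial, monomial_mul, tsub_add_cancel_of_le hle]
  rw [hmul]
  exact Ideal.mul_mem_left _ _ (Ideal.subset_span ⟨i, rfl⟩)

/-- Modulo `m A(G)`, an element of `t`-degree at most `k` is a combination of basic covers. -/
theorem mk_mem_span_basicExponent {P : Ideal (symbolicRees K G)} (hP : irrelevantIdeal K G ≤ P)
    {k : ℕ} (f : symbolicRees K G) (hf : degreeOf none (f : St K n) ≤ k) :
    Ideal.Quotient.mkₐ K P f ∈ Submodule.span K (Set.range fun s : BasicExponent G k =>
      Ideal.Quotient.mkₐ K P (reesMonomial K s.1 s.2.2.1)) := by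
  rw [eq_sum_reesMonomial f, map_sum]
  refine Submodule.sum_mem _ fun s _ => ?_
  rw [map_smul]
  refine Submodule.smul_mem _ _ ?_
  by_cases hb : IsBasicCover G (s.1 none) fun i => s.1 (some i)
  · exact Submodule.subset_span
      ⟨⟨s.1, (monomial_le_degreeOf none s.2).trans hf, hb⟩, rfl⟩
  · have h0 : Ideal.Quotient.mkₐ K P (reesMonomial K s.1
        (isCoverExponent_of_mem_support f.2 s.2)) = 0 :=
      Ideal.Quotient.eq_zero_iff_mem.2 (hP (reesMonomial_mem_irrelevantIdeal _ hb))
    rw [h0]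
    exact Submodule.zero_mem _

theorem card_le_of_algebraicIndependent_mod {P : Ideal (symbolicRees K G)}
    (hP : irrelevantIdeal K G ≤ P) {C : Finset (Fin n)}
    (hC : ∀ u v, G.Adj u v → u ∈ C ∨ v ∈ C) {m : ℕ} (x : Fin m → symbolicRees K G)
    (hx : ∀ p : MvPolynomial (Fin m) K, aeval x p ∈ P → p = 0) : m ≤ C.card + 1 := by
  obtain ⟨d, hd⟩ : ∃ d, ∀ i, degreeOf none (x i : St K n) ≤ d :=
    ⟨Finset.univ.sup fun i => degreeOf none (x i : St K n), fun i =>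
      Finset.le_sup (f := fun i => degreeOf none (x i : St K n)) (Finset.mem_univ i)⟩
  have hgrowth : ∀ N : ℕ, (N + 1) ^ m ≤ (m * (N * d) + 1) ^ (C.card + 1) := fun N => by
    let L : MvPolynomial (Fin m) K →ₗ[K] (symbolicRees K G ⧸ P) :=
      ((Ideal.Quotient.mkₐ K P).comp (aeval x)).toLinearMap
    have hL : LinearMap.ker L = ⊥ := LinearMap.ker_eq_bot'.2 fun p hp =>
      hx p (Ideal.Quotient.eq_zero_iff_mem.1 hp)
    let e : (Fin m → Fin (N + 1)) → (Fin m →₀ ℕ) := fun a =>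
      Finsupp.equivFunOnFinite.symm fun i => (a i : ℕ)
    have he : Function.Injective e := fun a b hab => by
      funext i
      exact Fin.ext (congrFun (Finsupp.equivFunOnFinite.symm.injective hab) i)
    have hli : LinearIndependent K fun a => L (monomial (e a) 1) := by
      have h := ((basisMonomials (Fin m) K).linearIndependent.comp e he).map' L hL
      simpa [Function.comp_def] using h
    obtain ⟨hfin, hcard⟩ := finite_basicExponent_and_card_le hC (m * (N * d))
    have := Fintype.ofFinite (BasicExponent G (m * (N * d)))
    let b := fun s : BasicExponent G (m * (N * d)) =>
      Ideal.Quotient.mkₐ K P (reesMonomial K s.1 s.2.2.1)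
    have hsub : Submodule.span K (Set.range fun a => L (monomial (e a) 1)) ≤
        Submodule.span K (Set.range b) := by
      rw [Submodule.span_le]
      rintro _ ⟨a, rfl⟩
      refine mk_mem_span_basicExponent hP _ ?_
      have hcoe : ((aeval x (monomial (e a) (1 : K)) : symbolicRees K G) : St K n) =
          ∏ i, (x i : St K n) ^ (a i : ℕ) := by
        rw [aeval_monomial, Finsupp.prod_fintype _ _ (fun i => pow_zero _)]
        simp [e]
      refine (congrArg (degreeOf none) hcoe).le.trans ((degreeOf_prod_le _ _ _).trans ?_)
      refine (Finset.sum_le_card_nsmul _ _ (N * d) fun i _ => ?_).trans (by simp)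
      exact (degreeOf_pow_le _ _ _).trans
        (Nat.mul_le_mul (Nat.le_of_lt_succ (a i).2) (hd i))
    have : Module.Finite K (Submodule.span K (Set.range b)) :=
      FiniteDimensional.span_of_finite K (Set.finite_range b)
    calc (N + 1) ^ m = Fintype.card (Fin m → Fin (N + 1)) := by simp
      _ = Module.finrank K (Submodule.span K (Set.range fun a => L (monomial (e a) 1))) :=
          (finrank_span_eq_card hli).symm
      _ ≤ Module.finrank K (Submodule.span K (Set.range b)) := Submodule.finrank_mono hsub
      _ ≤ Fintype.card (BasicExponent G (m * (N * d))) := finrank_range_le_card b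
      _ ≤ _ := by rwa [← Nat.card_eq_fintype_card]
  by_contra! hlt
  let M := (m * d + 1) ^ (C.card + 1)
  have h1 : (M + 1) ^ (C.card + 1 + 1) ≤ (M + 1) ^ (C.card + 1) * M := by
    calc (M + 1) ^ (C.card + 1 + 1) ≤ (M + 1) ^ m := Nat.pow_le_pow_right (by omega) hlt
      _ ≤ (m * (M * d) + 1) ^ (C.card + 1) := hgrowth M
      _ ≤ ((M + 1) * (m * d + 1)) ^ (C.card + 1) := Nat.pow_le_pow_left (by nlinarith) _
      _ = (M + 1) ^ (C.card + 1) * M := mul_pow _ _ _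
  rw [pow_succ (M + 1) (C.card + 1)] at h1
  have := Nat.le_of_mul_le_mul_left h1 (by positivity)
  omega

theorem krullDim_zeroLocus_irrelevantIdeal_le {C : Finset (Fin n)}
    (hC : ∀ u v, G.Adj u v → u ∈ C ∨ v ∈ C) :
    Order.krullDim (PrimeSpectrum.zeroLocus (irrelevantIdeal K G : Set (symbolicRees K G))) ≤
      ((C.card + 1 : ℕ) : WithBot ℕ∞) := by
  refine iSup_le fun l => ?_
  let P : Fin (l.length + 1) → Ideal (symbolicRees K G) := fun i => (l i).1.asIdeal
  have hlt : ∀ i : Fin l.length, P i.castSucc < P i.succ := fun i => l.step i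
  choose x hx hx' using fun i => SetLike.exists_of_lt (hlt i)
  have := card_le_of_algebraicIndependent_mod (l 0).2 hC x
    (eq_zero_of_aeval_mem_of_prime_chain P (fun i => (l i).1.isPrime) (fun i => (hlt i).le) x hx hx')
  exact_mod_cast this

end SymbolicRees

section Faces

variable {K : Type*} [Field K] {n : ℕ} {G : SimpleGraph (Fin n)}

/-- A face of the monoid of covers. -/
structure IsCoverFace (G : SimpleGraph (Fin n)) (F : (Option (Fin n) →₀ ℕ) → Prop) : Prop where
  zero : F 0
  add_iff : ∀ s t, IsCoverExponent G s → IsCoverExponent G t → (F (s + t) ↔ F s ∧ F t)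

theorem IsCoverFace.mul_notMem_support {F : (Option (Fin n) →₀ ℕ) → Prop}
    (hF : IsCoverFace G F) {f g : St K n} (hf : ∀ s ∈ f.support, IsCoverExponent G s ∧ ¬ F s)
    (hg : ∀ s ∈ g.support, IsCoverExponent G s) {s : Option (Fin n) →₀ ℕ}
    (hs : s ∈ (f * g).support) : ¬ F s := by
  classical
  obtain ⟨a, ha, b, hb, rfl⟩ := Finset.mem_add.1 (support_mul f g hs)
  rw [hF.add_iff a b (hf a ha).1 (hg b hb)]
  exact fun h => (hf a ha).2 h.1

/-- The ideal of `A(G)` spanned by the cover monomials outside a face. -/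
def faceIdeal (K : Type*) [Field K] {F : (Option (Fin n) →₀ ℕ) → Prop} (hF : IsCoverFace G F) :
    Ideal (symbolicRees K G) where
  carrier := {f | ∀ s ∈ (f : St K n).support, ¬ F s}
  zero_mem' := by simp
  add_mem' := by
    classical
    intro f g hf hg s hs
    rcases Finset.mem_union.1 (support_add hs) with h | h
    exacts [hf s h, hg s h]
  smul_mem' := by
    intro f g hg s hs
    rw [smul_eq_mul, mul_comm] at hs
    exact hF.mul_notMem_support
      (fun t ht => ⟨isCoverExponent_of_mem_support g.2 ht, hg t ht⟩)
      (fun t ht => isCoverExponent_of_mem_support f.2 ht) hs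

theorem mem_faceIdeal {F : (Option (Fin n) →₀ ℕ) → Prop} (hF : IsCoverFace G F)
    {f : symbolicRees K G} : f ∈ faceIdeal K hF ↔ ∀ s ∈ (f : St K n).support, ¬ F s := Iff.rfl

theorem reesMonomial_mem_faceIdeal {F : (Option (Fin n) →₀ ℕ) → Prop} (hF : IsCoverFace G F)
    {s : Option (Fin n) →₀ ℕ} (hs : IsCoverExponent G s) :
    reesMonomial K s hs ∈ faceIdeal K hF ↔ ¬ F s := by
  classical
  simp [mem_faceIdeal, reesMonomial, support_monomial]

theorem exists_face_decomposition (F : (Option (Fin n) →₀ ℕ) → Prop) (f : St K n) :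
    ∃ f₀ f₁ : St K n, f = f₀ + f₁ ∧ (∀ s ∈ f₀.support, s ∈ f.support ∧ F s) ∧
      ∀ s ∈ f₁.support, s ∈ f.support ∧ ¬ F s := by
  classical
  have hsupp : ∀ (A : Finset (Option (Fin n) →₀ ℕ)) s,
      s ∈ (∑ t ∈ A, monomial t (coeff t f)).support → s ∈ A := fun A s hs => by
    obtain ⟨t, ht, hst⟩ := Finset.mem_biUnion.1 (support_sum hs)
    rwa [Finset.mem_singleton.1 (support_monomial_subset hst)]
  refine ⟨∑ s ∈ f.support.filter F, monomial s (coeff s f),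
    ∑ s ∈ f.support.filter (¬ F ·), monomial s (coeff s f), ?_, fun s hs => ?_, fun s hs => ?_⟩
  · rw [Finset.sum_filter_add_sum_filter_not]
    exact f.as_sum
  · exact Finset.mem_filter.1 (hsupp _ s hs)
  · exact Finset.mem_filter.1 (hsupp _ s hs)

theorem faceIdeal_isPrime {F : (Option (Fin n) →₀ ℕ) → Prop} (hF : IsCoverFace G F) :
    (faceIdeal K hF).IsPrime := by
  classical
  refine ⟨fun h => ?_, fun {f g} hfg => ?_⟩
  · have h1 : reesMonomial K 0 isCoverExponent_zero ∈ faceIdeal K hF := h ▸ Submodule.mem_top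
    exact (reesMonomial_mem_faceIdeal hF _).1 h1 hF.zero
  · have hcf := fun s => isCoverExponent_of_mem_support (s := s) f.2
    have hcg := fun s => isCoverExponent_of_mem_support (s := s) g.2
    obtain ⟨f₀, f₁, hf, hf₀, hf₁⟩ := exists_face_decomposition F (f : St K n)
    obtain ⟨g₀, g₁, hg, hg₀, hg₁⟩ := exists_face_decomposition F (g : St K n)
    have hzero : f₀ * g₀ = 0 := by
      by_contra hne
      obtain ⟨s, hs⟩ := Finset.nonempty_iff_ne_empty.2 (support_eq_empty.not.2 hne)
      have hFs : F s := by
        obtain ⟨a, ha, b, hb, rfl⟩ := Finset.mem_add.1 (support_mul _ _ hs)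
        exact (hF.add_iff a b (hcf _ (hf₀ a ha).1) (hcg _ (hg₀ b hb).1)).2
          ⟨(hf₀ a ha).2, (hg₀ b hb).2⟩
      have h1 : s ∉ (f₁ * (g : St K n)).support := fun h => hF.mul_notMem_support
        (fun t ht => ⟨hcf _ (hf₁ t ht).1, (hf₁ t ht).2⟩) hcg h hFs
      have h2 : s ∉ (g₁ * f₀).support := fun h => hF.mul_notMem_support
        (fun t ht => ⟨hcg _ (hg₁ t ht).1, (hg₁ t ht).2⟩) (fun t ht => hcf _ (hf₀ t ht).1) h hFs
      have h3 : s ∉ ((f * g : symbolicRees K G) : St K n).support := fun h => hfg s h hFs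
      have hsum : ((f * g : symbolicRees K G) : St K n) =
          f₀ * g₀ + g₁ * f₀ + f₁ * (g : St K n) := by
        rw [MulMemClass.coe_mul]
        conv_lhs => rw [hf]
        rw [add_mul]
        conv_lhs => enter [1]; rw [hg]
        ring
      rw [notMem_support_iff] at h1 h2 h3
      rw [hsum, coeff_add, coeff_add, h1, h2, add_zero, add_zero] at h3
      exact mem_support_iff.1 hs h3
    rcases mul_eq_zero.1 hzero with h | h
    · left
      rw [mem_faceIdeal, hf, h, zero_add]
      exact fun s hs => (hf₁ s hs).2
    · right
      rw [mem_faceIdeal, hg, h, zero_add]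
      exact fun s hs => (hg₁ s hs).2

/-- Linear functionals which are nonnegative on covers cut out a face. -/
theorem isCoverFace_of_nonneg {ι : Type*} (w : ι → (Option (Fin n) →₀ ℕ) →+ ℤ) (p : ι → Prop)
    (hw : ∀ i s, IsCoverExponent G s → 0 ≤ w i s) :
    IsCoverFace G fun s => ∀ i, p i → w i s = 0 where
  zero := fun i _ => map_zero _
  add_iff := fun s t hs ht => by
    constructor
    · intro h
      refine ⟨fun i hi => ?_, fun i hi => ?_⟩ <;>
      · have h0 := h i hi
        have h1 := hw i s hs
        have h2 := hw i t ht
        rw [map_add] at h0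
        omega
    · rintro ⟨h1, h2⟩ i hi
      rw [map_add, h1 i hi, h2 i hi, add_zero]

theorem le_krullDim_zeroLocus_of_functionals {ι : Type*}
    (w : ι → (Option (Fin n) →₀ ℕ) →+ ℤ) (hw : ∀ i s, IsCoverExponent G s → 0 ≤ w i s)
    (p : ι → Prop) (hp : ∀ v : Fin n, ∃ i, p i ∧ w i (Finsupp.single (some v) 1) ≠ 0)
    {m : ℕ} (e : Fin m → ι) (c : Fin m → Option (Fin n) →₀ ℕ)
    (hc : ∀ j, IsCoverExponent G (c j)) (hpc : ∀ i j, p i → w i (c j) = 0)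
    (hlt : ∀ i j, i < j → w (e i) (c j) = 0) (hne : ∀ j, w (e j) (c j) ≠ 0) :
    (m : WithBot ℕ∞) ≤ Order.krullDim
      (PrimeSpectrum.zeroLocus (irrelevantIdeal K G : Set (symbolicRees K G))) := by
  classical
  let q : Fin (m + 1) → ι → Prop := fun j i => p i ∨ ∃ l : Fin m, l.castSucc < j ∧ e l = i
  have hq : ∀ j, IsCoverFace G fun s => ∀ i, q j i → w i s = 0 := fun j =>
    isCoverFace_of_nonneg w (q j) hw
  have hirr : ∀ j, irrelevantIdeal K G ≤ faceIdeal K (hq j) := fun j => by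
    rw [irrelevantIdeal, Ideal.span_le]
    rintro a ⟨v, hv⟩ s hs hF
    rw [hv, X, support_monomial, if_neg one_ne_zero, Finset.mem_singleton] at hs
    obtain ⟨i, hpi, hi⟩ := hp v
    exact hi (hs ▸ hF i (Or.inl hpi))
  refine Order.le_krullDim_iff.2 ⟨⟨m, fun j => ⟨⟨faceIdeal K (hq j), faceIdeal_isPrime _⟩,
    hirr j⟩, fun j => ?_⟩, rfl⟩
  change faceIdeal K (hq j.castSucc) < faceIdeal K (hq j.succ)
  refine SetLike.lt_iff_le_and_exists.2 ⟨fun f hf s hs hF => hf s hs fun i hi => hF i ?_,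
    reesMonomial K (c j) (hc j), (reesMonomial_mem_faceIdeal (hq _) _).2 fun hF => ?_,
    fun hmem => (reesMonomial_mem_faceIdeal (hq _) _).1 hmem ?_⟩
  · exact hi.imp id fun ⟨l, hl, h⟩ => ⟨l, hl.trans (Fin.castSucc_lt_succ), h⟩
  · exact hne j (hF _ (Or.inr ⟨j, Fin.castSucc_lt_succ, rfl⟩))
  · rintro i (hi | ⟨l, hl, rfl⟩)
    exacts [hpc i j hi, hlt l j hl]

end Faces

section Trees

variable {n : ℕ} {G : SimpleGraph (Fin n)}

/-- The functional `(k, α) ↦ α v` on exponents, where `v = none` gives `(k, α) ↦ k`. -/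
noncomputable def exponentAt (o : Option (Fin n)) : (Option (Fin n) →₀ ℕ) →+ ℤ :=
  (Nat.castAddMonoidHom ℤ).comp (Finsupp.applyAddHom o)

@[simp]
theorem exponentAt_apply (o : Option (Fin n)) (s : Option (Fin n) →₀ ℕ) :
    exponentAt o s = (s o : ℤ) := rfl

/-- The exponent vector of `x^α t^k`. -/
noncomputable def toExponent (k : ℕ) (α : Fin n → ℕ) : Option (Fin n) →₀ ℕ :=
  Finsupp.equivFunOnFinite.symm fun o => o.elim k α

@[simp]
theorem toExponent_none (k : ℕ) (α : Fin n → ℕ) : toExponent k α none = k := rfl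

@[simp]
theorem toExponent_some (k : ℕ) (α : Fin n → ℕ) (v : Fin n) : toExponent k α (some v) = α v := rfl

namespace TreeRooting

variable (T : TreeRooting G)

theorem isCover_iff {k : ℕ} {α : Fin n → ℕ} :
    IsCover G k α ↔ ∀ v, v ≠ T.root → k ≤ α v + α (T.parent v) := by
  refine ⟨fun h v hv => h (T.adj_parent v hv), fun h i j hij => ?_⟩
  rcases T.eq_parent_of_adj i j hij with ⟨h1, rfl⟩ | ⟨h1, rfl⟩
  · exact h i h1
  · exact add_comm (α j) _ ▸ h j h1

/-- The functionals defining the cone of covers of a rooted tree: the slack of the edge joining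
`v` to its parent, the value at the root, and the degree. -/
noncomputable def functional : Option (Fin n) → (Option (Fin n) →₀ ℕ) →+ ℤ
  | none => exponentAt none
  | some v => if v = T.root then exponentAt (some v) else
      exponentAt (some v) + exponentAt (some (T.parent v)) - exponentAt none

theorem functional_nonneg (o : Option (Fin n)) {s : Option (Fin n) →₀ ℕ}
    (hs : IsCoverExponent G s) : 0 ≤ T.functional o s := by
  cases o with
  | none => simp [functional]
  | some v =>
    by_cases hv : v = T.root
    · simp [functional, hv]
    · have h : s none ≤ s (some v) + s (some (T.parent v)) := hs (T.adj_parent v hv)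
      simp only [functional, hv, if_false, AddMonoidHom.sub_apply, AddMonoidHom.add_apply,
        exponentAt_apply]
      omega

theorem functional_toExponent_none (k : ℕ) (α : Fin n → ℕ) :
    T.functional none (toExponent k α) = k := rfl

theorem functional_toExponent_root (k : ℕ) (α : Fin n → ℕ) :
    T.functional (some T.root) (toExponent k α) = α T.root := by simp [functional]

theorem functional_toExponent_some {v : Fin n} (hv : v ≠ T.root) (k : ℕ) (α : Fin n → ℕ) :
    T.functional (some v) (toExponent k α) = α v + α (T.parent v) - k := by
  simp [functional, hv]

/-- There is a cover which is tight on every edge except the one joining `v` to its parent. -/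
theorem exists_cover_slack_at {v : Fin n} (hv : v ≠ T.root) :
    ∃ α : Fin n → ℕ, IsCover G 2 α ∧ 2 < α v + α (T.parent v) ∧
      ∀ u, u ≠ T.root → u ≠ v → α u + α (T.parent u) = 2 := by
  obtain ⟨f, h0, hf⟩ := T.exists_rec 1 fun u a => if u = v then 2 else 2 - a
  have hle : ∀ u, f u ≤ 2 := fun u => by
    by_cases hu : u = T.root
    · subst hu
      omega
    · rw [hf u hu]
      split_ifs <;> omega
  have hone : ∀ d u, T.depth u = d → d < T.depth v → f u = 1 := by
    intro d
    induction d with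
    | zero =>
      intro u hu _
      have : u = T.root := by
        by_contra h
        have := T.depth_eq u h
        omega
      rw [this, h0]
    | succ d ih =>
      intro u hu hd
      have hur : u ≠ T.root := fun h => by
        have := T.depth_root
        rw [h] at hu
        omega
      have huv : u ≠ v := fun h => by
        rw [h] at hu
        omega
      have := T.depth_eq u hur
      rw [hf u hur, if_neg huv, ih (T.parent u) (by omega) (by omega)]
  have hfv : f v = 2 := by rw [hf v hv, if_pos rfl]
  have hpv : f (T.parent v) = 1 := hone _ _ rfl (by have := T.depth_eq v hv; omega)
  have htight : ∀ u, u ≠ T.root → u ≠ v → f u + f (T.parent u) = 2 := fun u hu huv => by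
    have := hle (T.parent u)
    rw [hf u hu, if_neg huv]
    omega
  refine ⟨f, T.isCover_iff.2 fun u hu => ?_, by omega, htight⟩
  by_cases huv : u = v
  · subst huv
    omega
  · exact (htight u hu huv).ge

end TreeRooting

namespace CoveredTree

variable (T : CoveredTree G)

theorem exists_tight_cover (o : Option T.cover) :
    ∃ c, IsCoverExponent G c ∧ T.functional (o.map Subtype.val) c ≠ 0 ∧
      (∀ u, u ≠ T.root → some u ≠ o.map Subtype.val → T.functional (some u) c = 0) ∧
      (o = none → T.functional (some T.root) c = 0) := by
  have hpar : ∀ a : ℕ, ∀ u, u ≠ T.root →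
      (T.depth u + a) % 2 + (T.depth (T.parent u) + a) % 2 = 1 := fun a u hu => by
    have := T.depth_eq u hu
    omega
  have hcov : ∀ a : ℕ, IsCoverExponent G (toExponent 1 fun u => (T.depth u + a) % 2) := fun a =>
    T.isCover_iff.2 fun u hu => (hpar a u hu).ge
  have htight : ∀ a : ℕ, ∀ u, u ≠ T.root →
      T.functional (some u) (toExponent 1 fun u => (T.depth u + a) % 2) = 0 := fun a u hu => by
    have := hpar a u hu
    rw [T.functional_toExponent_some hu]
    omega
  match o with
  | none =>
    refine ⟨_, hcov 0, ?_, fun u hu _ => htight 0 u hu, fun _ => ?_⟩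
    · rw [Option.map_none, T.functional_toExponent_none]
      norm_num
    · rw [T.functional_toExponent_root, T.depth_root]
      rfl
  | some v =>
    by_cases hv : v.1 = T.root
    · refine ⟨_, hcov 1, ?_, fun u hu _ => htight 1 u hu, fun h => by simp at h⟩
      rw [Option.map_some, hv, T.functional_toExponent_root, T.depth_root]
      norm_num
    · obtain ⟨α, hα, hlt, heq⟩ := T.exists_cover_slack_at hv
      refine ⟨toExponent 2 α, hα, ?_, fun u hu huv => ?_, fun h => by simp at h⟩
      · rw [Option.map_some, T.functional_toExponent_some hv]
        omega
      · have := heq u hu (by simpa using huv)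
        rw [T.functional_toExponent_some hu]
        omega

theorem le_krullDim (K : Type*) [Field K] :
    ((T.cover.card + 1 : ℕ) : WithBot ℕ∞) ≤ Order.krullDim
      (PrimeSpectrum.zeroLocus (irrelevantIdeal K G : Set (symbolicRees K G))) := by
  classical
  let key : Option T.cover → ℕ := fun o => o.elim 2 fun v => if v.1 = T.root then 1 else 0
  obtain ⟨e, he⟩ := exists_equiv_fin_monotone key (r := T.cover.card + 1) (by simp)
  choose c hc hne htight hroot using T.exists_tight_cover
  refine le_krullDim_zeroLocus_of_functionals T.functional (fun o _ => T.functional_nonneg o)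
    (fun o => ∃ u ∉ T.cover, o = some u) (fun v => ?_) (fun j => (e j).map Subtype.val)
    (fun j => c (e j)) (fun j => hc _) ?_ (fun i j hij => ?_) (fun j => hne _)
  · have hex : ∃ u ∉ T.cover, u = v ∨ T.parent u = v := by
      by_cases hv : v ∈ T.cover
      exacts [⟨_, T.child_notMem v hv, Or.inr (T.parent_child v hv)⟩, ⟨v, hv, Or.inl rfl⟩]
    obtain ⟨u, hu, huv⟩ := hex
    have hur : u ≠ T.root := fun h => hu (h ▸ T.root_mem)
    refine ⟨some u, ⟨u, hu, rfl⟩, ?_⟩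
    simp only [TreeRooting.functional, hur, if_false, AddMonoidHom.sub_apply,
      AddMonoidHom.add_apply, exponentAt_apply]
    rcases huv with rfl | rfl <;> simp [Finsupp.single_apply] <;> positivity
  · rintro _ j ⟨u, hu, rfl⟩
    refine htight _ u (fun h => hu (h ▸ T.root_mem)) fun h => ?_
    obtain ⟨v, -, hv⟩ := Option.map_eq_some_iff.1 h.symm
    exact hu (hv ▸ v.2)
  · have hkey : key (e i) ≤ key (e j) := he hij.le
    have hij' : e i ≠ e j := e.injective.ne hij.ne
    generalize e i = a at *
    generalize e j = b at *
    match a, b with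
    | none, none => exact absurd rfl hij'
    | none, some v =>
      simp only [key, Option.elim] at hkey
      split_ifs at hkey <;> omega
    | some v, b =>
      rw [Option.map_some]
      by_cases hv : v.1 = T.root
      · rw [hv]
        refine hroot b ?_
        match b with
        | none => rfl
        | some w =>
          simp only [key, Option.elim, hv, if_true] at hkey
          have hw : w.1 = T.root := by
            by_contra hw
            simp [hw] at hkey
          exact absurd (congrArg some (Subtype.ext (hv.trans hw.symm))) hij'
      · refine htight b v hv fun h => hij' ?_
        exact Option.map_injective Subtype.val_injective h

end CoveredTree

end Trees

/-- If `G` is a tree, then `gdim(G) = ν(G) + 1`; consequently the Krull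
dimension of the symbolic fiber cone satisfies `dim Ā(G) = ν(G) + 1`. -/
theorem gdim_eq_matchingNumber_of_tree (K : Type*) [Field K] {n : ℕ}
    (G : SimpleGraph (Fin n)) (htree : G.IsTree)
    (hiso : ∀ v : Fin n, ∃ w, G.Adj v w) :
    gdim G = matchingNumber G + 1 ∧
      ringKrullDim (symbolicFiberCone K G) = ((matchingNumber G + 1 : ℕ) : WithBot (WithTop ℕ)) := by
  have : Nontrivial (Fin n) := by
    obtain ⟨v⟩ := htree.connected.nonempty
    obtain ⟨w, hw⟩ := hiso v
    exact ⟨v, w, hw.ne⟩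
  obtain ⟨T⟩ := htree.nonempty_coveredTree
  refine ⟨by rw [T.gdim_eq, T.matchingNumber_eq], ?_⟩
  rw [T.matchingNumber_eq]
  exact (ringKrullDim_quotient (irrelevantIdeal K G)).trans
    (le_antisymm (krullDim_zeroLocus_irrelevantIdeal_le T.mem_or_mem) (T.le_krullDim K))
end
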